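/- Let Z be a nonnegative random variable on a probability space (Ω, μ), and let C₁ and C₂ be positive constants. If ∫ Z^{2n} dμ ≤ C₁ (C₂ n)^n for every integer n ≥ 1, then ∫ exp(δ Z²) dμ ≤ 1 + C₁/(1 − eδC₂) for every δ with 0 < δ < 1/(e C₂). -/

import Mathlib

open MeasureTheory
open scoped ENNReal

/-- **Lemma 2.4 (Cohen–Cuny; after Paley–Zygmund).** If a nonnegative random variable `Z`
on a probability space satisfies `∫ Z^{2n} dμ ≤ C₁ (C₂ n)^n` for all `n ≥ 1`, then
`∫ exp(δ Z²) dμ ≤ 1 + C₁/(1 - e δ C₂)` for every `0 < δ < 1/(e C₂)`. -/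
theorem lintegral_exp_sq_le_of_moment_bound
    {Ω : Type*} [MeasurableSpace Ω] (μ : Measure Ω) [IsProbabilityMeasure μ]
    (Z : Ω → ℝ) (hZmeas : Measurable Z) (hZnonneg : ∀ ω, 0 ≤ Z ω)
    (C₁ C₂ : ℝ) (hC₁ : 0 < C₁) (hC₂ : 0 < C₂)
    (hmom : ∀ n : ℕ, 1 ≤ n →
      ∫⁻ ω, ENNReal.ofReal (Z ω ^ (2 * n)) ∂μ ≤ ENNReal.ofReal (C₁ * (C₂ * n) ^ n))
    (δ : ℝ) (hδ0 : 0 < δ) (hδ : δ < 1 / (Real.exp 1 * C₂)) :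
    ∫⁻ ω, ENNReal.ofReal (Real.exp (δ * Z ω ^ 2)) ∂μ
      ≤ ENNReal.ofReal (1 + C₁ / (1 - Real.exp 1 * δ * C₂)) := by
  set r : ℝ := Real.exp 1 * δ * C₂ with hr
  have hr0 : 0 ≤ r := by positivity
  have hr1 : r < 1 := by
    rw [lt_div_iff₀ (by positivity)] at hδ
    rw [hr]; linarith
  have hexp : ∀ ω, ENNReal.ofReal (Real.exp (δ * Z ω ^ 2)) =
      ∑' n : ℕ, ENNReal.ofReal (δ ^ n / n.factorial) * ENNReal.ofReal (Z ω ^ (2 * n)) := by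
    intro ω
    have h := NormedSpace.expSeries_div_hasSum_exp (δ * Z ω ^ 2)
    rw [← Real.exp_eq_exp_ℝ] at h
    rw [← h.tsum_eq, ENNReal.ofReal_tsum_of_nonneg (fun n => by positivity) h.summable]
    refine tsum_congr fun n => ?_
    rw [← ENNReal.ofReal_mul (by positivity)]
    congr 1
    rw [mul_pow, ← pow_mul]; ring
  have hsum : HasSum (fun n : ℕ => (if n = 0 then (1 : ℝ) else 0) + C₁ * r ^ n)
      (1 + C₁ / (1 - r)) := by
    have h1 := (hasSum_geometric_of_lt_one hr0 hr1).mul_left C₁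
    rw [← div_eq_mul_inv] at h1
    exact (hasSum_ite_eq 0 (1 : ℝ)).add h1
  have hnn : ∀ n : ℕ, 0 ≤ (if n = 0 then (1 : ℝ) else 0) + C₁ * r ^ n := by
    intro n
    split_ifs <;> positivity
  simp_rw [hexp]
  rw [lintegral_tsum (fun n => by fun_prop), ← hsum.tsum_eq,
    ENNReal.ofReal_tsum_of_nonneg hnn hsum.summable]
  refine ENNReal.tsum_le_tsum fun n => ?_
  rw [lintegral_const_mul _ (by fun_prop)]
  rcases Nat.eq_zero_or_pos n with rfl | hn
  · simp only [pow_zero, Nat.factorial_zero, Nat.cast_one, div_one, mul_zero, lintegral_const,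
      measure_univ, mul_one, ENNReal.ofReal_one, if_true]
    exact ENNReal.one_le_ofReal.2 (by linarith)
  · refine (mul_le_mul_right (hmom n hn) _).trans ?_
    rw [← ENNReal.ofReal_mul (by positivity)]
    apply ENNReal.ofReal_le_ofReal
    rw [if_neg (by omega), zero_add]
    have h := Real.pow_div_factorial_le_exp (n : ℝ) (by positivity) n
    have h2 : Real.exp (n : ℝ) = Real.exp 1 ^ n := by rw [← Real.exp_nat_mul, mul_one]
    rw [h2] at h
    calc δ ^ n / n.factorial * (C₁ * (C₂ * n) ^ n)
        = C₁ * (δ ^ n * C₂ ^ n) * ((n : ℝ) ^ n / n.factorial) := by rw [mul_pow]; ring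
      _ ≤ C₁ * (δ ^ n * C₂ ^ n) * Real.exp 1 ^ n := by gcongr
      _ = C₁ * r ^ n := by rw [hr, mul_pow, mul_pow]; ring
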